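/- arXiv:math/0611745 — 3 statements merged into one kernel-verified Lean document; each statement's English description precedes it below -/
import Mathlib

section
/- Let n ≥ 1, let x_1 < ⋯ < x_n be real numbers and m_1, …, m_n > 0, set l_k = x_{k+1} − x_k, and let A(z) be the third entry of S(z)(1,0,0)ᵗ, where S(z) = G_n(z) L_{n−1} G_{n−1}(z) ⋯ L_1 G_1(z) with L_k = [[1, l_k, l_k²/2],[0,1,l_k],[0,0,1]] and G_k(z) = [[1,0,0],[0,1,0],[−2 m_k z,0,1]]. Then A is a polynomial of degree n in z whose roots are all real, simple, and nonnegative; precisely, A has exactly n distinct real roots 0 = λ_0 < λ_1 < ⋯ < λ_{n−1}. -/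
open Polynomial Matrix

/-- The transfer matrix `L_k` of the discrete cubic string (with gap `l`). -/
noncomputable def Lmat (l : ℝ) : Matrix (Fin 3) (Fin 3) (Polynomial ℝ) :=
  !![1, Polynomial.C l, Polynomial.C (l ^ 2 / 2);
     0, 1, Polynomial.C l;
     0, 0, 1]

/-- The transfer matrix `G_k(z)` of the discrete cubic string (with mass `m`). -/
noncomputable def Gmat (m : ℝ) : Matrix (Fin 3) (Fin 3) (Polynomial ℝ) :=
  !![1, 0, 0;
     0, 1, 0;
     Polynomial.C (-2 * m) * Polynomial.X, 0, 1]

/-- The transition matrix `S(z) = G_n(z) L_{n−1} G_{n−1}(z) ⋯ L_1 G_1(z)` of the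
discrete cubic string with masses `m 1, …, m n` and gaps `l 1, …, l (n−1)`. -/
noncomputable def transMat (m l : ℕ → ℝ) : ℕ → Matrix (Fin 3) (Fin 3) (Polynomial ℝ)
  | 0 => 1
  | 1 => Gmat (m 1)
  | (k + 2) => Gmat (m (k + 2)) * Lmat (l (k + 1)) * transMat m l (k + 1)

/-- Cross product of two planar vectors. -/
def cr (p q r s : ℝ) : ℝ := p * s - q * r

/-- The six interlacing inequalities, for pairs in the algebra `ε² = -κ`, `t = τ + σ ε`. -/
structure Inv6 (κ τ σ a a' b b' c c' : ℝ) : Prop where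
  ab : 0 ≤ cr a a' b b'
  ac : 0 ≤ cr a a' c c'
  bc : 0 ≤ cr b b' c c'
  bta : 0 ≤ cr b b' (a * τ - κ * a' * σ) (a * σ + a' * τ)
  cta : 0 ≤ cr c c' (a * τ - κ * a' * σ) (a * σ + a' * τ)
  ctb : 0 ≤ cr c c' (b * τ - κ * b' * σ) (b * σ + b' * τ)

theorem Inv6.e1 {κ τ σ a a' b b' c c' : ℝ} (hκ : 0 ≤ κ) (hσ : 0 ≤ σ)
    (h : Inv6 κ τ σ a a' b b' c c') {s : ℝ} (hs : 0 ≤ s) :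
    Inv6 κ τ σ (a + s * b) (a' + s * b') b b' c c' := by
  obtain ⟨h1, h2, h3, h4, h5, h6⟩ := h
  simp only [cr] at *
  refine ⟨?_, ?_, ?_, ?_, ?_, ?_⟩ <;> simp only [cr]
  · linarith
  · linarith [mul_nonneg hs h3]
  · linarith
  · have : 0 ≤ s * (σ * (b ^ 2 + κ * b' ^ 2)) := by positivity
    linarith
  · linarith [mul_nonneg hs h6]
  · linarith

theorem Inv6.e2 {κ τ σ a a' b b' c c' : ℝ} (hκ : 0 ≤ κ) (hσ : 0 ≤ σ)
    (h : Inv6 κ τ σ a a' b b' c c') {s : ℝ} (hs : 0 ≤ s) :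
    Inv6 κ τ σ a a' (b + s * c) (b' + s * c') c c' := by
  obtain ⟨h1, h2, h3, h4, h5, h6⟩ := h
  simp only [cr] at *
  refine ⟨?_, ?_, ?_, ?_, ?_, ?_⟩ <;> simp only [cr]
  · linarith [mul_nonneg hs h2]
  · linarith
  · linarith
  · linarith [mul_nonneg hs h5]
  · linarith
  · have : 0 ≤ s * (σ * (c ^ 2 + κ * c' ^ 2)) := by positivity
    linarith

theorem Inv6.e3 {κ τ σ a a' b b' c c' : ℝ} (hκ : 0 ≤ κ) (hσ : 0 ≤ σ)
    (h : Inv6 κ τ σ a a' b b' c c') {s : ℝ} (hs : 0 ≤ s) :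
    Inv6 κ τ σ a a' b b' (c + s * (a * τ - κ * a' * σ)) (c' + s * (a * σ + a' * τ)) := by
  obtain ⟨h1, h2, h3, h4, h5, h6⟩ := h
  simp only [cr] at *
  refine ⟨?_, ?_, ?_, ?_, ?_, ?_⟩ <;> simp only [cr]
  · linarith
  · have : 0 ≤ s * (σ * (a ^ 2 + κ * a' ^ 2)) := by positivity
    linarith
  · linarith [mul_nonneg hs h4]
  · linarith
  · linarith
  · have : 0 ≤ s * ((τ ^ 2 + κ * σ ^ 2) * (a * b' - a' * b)) :=
      mul_nonneg hs (mul_nonneg (by positivity) h1)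
    linarith

theorem Inv6.L {κ τ σ a a' b b' c c' : ℝ} (hκ : 0 ≤ κ) (hσ : 0 ≤ σ)
    (h : Inv6 κ τ σ a a' b b' c c') {l : ℝ} (hl : 0 ≤ l) :
    Inv6 κ τ σ (a + l * b + l ^ 2 / 2 * c) (a' + l * b' + l ^ 2 / 2 * c')
      (b + l * c) (b' + l * c') c c' := by
  have := ((h.e1 hκ hσ (s := l / 2) (by positivity)).e2 hκ hσ hl).e1 hκ hσ (s := l / 2)
    (by positivity)
  convert this using 1 <;> ring

/-- Nonvanishing of the first entry is preserved by `L`. -/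
theorem Inv6.ne_e1 {τ σ a a' b b' c c' : ℝ} (hσ : 0 < σ)
    (h : Inv6 1 τ σ a a' b b' c c') {s : ℝ} (hs : 0 ≤ s) (h0 : 0 < a ^ 2 + a' ^ 2) :
    0 < (a + s * b) ^ 2 + (a' + s * b') ^ 2 := by
  by_contra hc
  have e1 : a + s * b = 0 := by nlinarith [sq_nonneg (a + s * b), sq_nonneg (a' + s * b')]
  have e2 : a' + s * b' = 0 := by nlinarith [sq_nonneg (a + s * b), sq_nonneg (a' + s * b')]
  have ha : a = - (s * b) := by linarith
  have ha' : a' = - (s * b') := by linarith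
  have h4 := mul_nonneg hs h.bta
  simp only [cr, ha, ha'] at h4 h0
  have : σ * ((-(s * b)) ^ 2 + (-(s * b')) ^ 2) > 0 := mul_pos hσ h0
  nlinarith

theorem Inv6.ne_L {τ σ a a' b b' c c' : ℝ} (hσ : 0 < σ)
    (h : Inv6 1 τ σ a a' b b' c c') {l : ℝ} (hl : 0 ≤ l) (h0 : 0 < a ^ 2 + a' ^ 2) :
    0 < (a + l * b + l ^ 2 / 2 * c) ^ 2 + (a' + l * b' + l ^ 2 / 2 * c') ^ 2 := by
  have hl2 : 0 ≤ l / 2 := by positivity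
  have h1 := h.ne_e1 hσ hl2 h0
  have := ((h.e1 zero_le_one hσ.le hl2).e2 zero_le_one hσ.le hl).ne_e1 hσ hl2 h1
  convert this using 1; ring

/-- Sign pattern for `t < 0`. -/
def Pos3 (a b c : ℝ) : Prop := 0 < b * c ∨ 0 < a * b ∨ a * c < 0

theorem Pos3.e1 {a b c s : ℝ} (hs : 0 ≤ s) (h : Pos3 a b c) : Pos3 (a + s * b) b c := by
  unfold Pos3 at *
  by_cases h1 : 0 < b * c
  · exact Or.inl h1
  rcases h with h | h | h
  · exact Or.inl h
  · right; left; nlinarith [mul_nonneg hs (sq_nonneg b)]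
  · right; right; nlinarith

theorem Pos3.e2 {a b c s : ℝ} (hs : 0 ≤ s) (h : Pos3 a b c) : Pos3 a (b + s * c) c := by
  unfold Pos3 at *
  by_cases h1 : a * c < 0
  · exact Or.inr (Or.inr h1)
  rcases h with h | h | h
  · left; nlinarith [mul_nonneg hs (sq_nonneg c)]
  · right; left; nlinarith
  · exact Or.inr (Or.inr h)

theorem Pos3.e3 {a b c s : ℝ} (hs : 0 ≤ s) (h : Pos3 a b c) : Pos3 a b (c - s * a) := by
  unfold Pos3 at *
  by_cases h1 : 0 < a * b
  · exact Or.inr (Or.inl h1)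
  rcases h with h | h | h
  · left; nlinarith
  · exact Or.inr (Or.inl h)
  · right; right; nlinarith [mul_nonneg hs (sq_nonneg a)]

theorem Pos3.L {a b c l : ℝ} (hl : 0 ≤ l) (h : Pos3 a b c) :
    Pos3 (a + l * b + l ^ 2 / 2 * c) (b + l * c) c := by
  have := ((h.e1 (s := l / 2) (by positivity)).e2 hl).e1 (s := l / 2) (by positivity)
  convert this using 1; ring

/-- All properties of the state `(a,b,c)` after `k+1` masses. -/
structure Good (k : ℕ) (a b c : ℝ[X]) : Prop where
  da : a.natDegree ≤ k
  db : b.natDegree ≤ k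
  dc : c.natDegree ≤ k + 1
  ca : 0 ≤ (-1) ^ k * a.coeff k
  cb : 0 ≤ (-1) ^ k * b.coeff k
  cc : 0 < (-1) ^ (k + 1) * c.coeff (k + 1)
  c0 : c.eval 0 = 0
  neg : ∀ z : ℝ, z < 0 → 0 < a.eval z ∧ 0 ≤ b.eval z ∧ 0 < c.eval z
  zero : a.eval 0 = 1 ∧ b.eval 0 = 0
  pos : ∀ z : ℝ, 0 < z → Pos3 (a.eval z) (b.eval z) (c.eval z)
  cx : ∀ z : ℂ, z.im < 0 → Inv6 1 (-z.re) (-z.im) (aeval z a).re (aeval z a).im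
    (aeval z b).re (aeval z b).im (aeval z c).re (aeval z c).im ∧
    0 < (aeval z a).re ^ 2 + (aeval z a).im ^ 2 ∧ aeval z c ≠ 0
  wr : ∀ z : ℝ, Inv6 0 (-z) 1 (a.eval z) (-(derivative a).eval z)
    (b.eval z) (-(derivative b).eval z) (c.eval z) (-(derivative c).eval z)
  ws : ∀ z : ℝ, ∃ s > 0, s * (a.eval z) ^ 2 ≤
    cr (a.eval z) (-(derivative a).eval z) (c.eval z) (-(derivative c).eval z)

theorem cxstep {σ τ a a' b b' c c' s : ℝ} (hσ : 0 < σ) (hs : 0 < s)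
    (h : Inv6 1 τ σ a a' b b' c c') (h0 : 0 < a ^ 2 + a' ^ 2)
    (e1 : c + s * (a * τ - 1 * a' * σ) = 0) (e2 : c' + s * (a * σ + a' * τ) = 0) : False := by
  have h2 := h.ac
  simp only [cr] at h2
  have : 0 < s * (σ * (a ^ 2 + a' ^ 2)) := by positivity
  have hc : c = - (s * (a * τ - 1 * a' * σ)) := by linarith
  have hc' : c' = - (s * (a * σ + a' * τ)) := by linarith
  rw [hc, hc'] at h2
  linarith

theorem good_init (m : ℝ) (hm : 0 < m) : Good 0 1 0 (C (-2 * m) * X) := by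
  refine ⟨by simp, by simp, ?_, by simp, by simp, by simp [hm], by simp, ?_, by simp, ?_, ?_, ?_, ?_⟩
  · simpa using (natDegree_C_mul_le (-2 * m) X).trans natDegree_X_le
  · intro z hz
    simp; nlinarith
  · intro z hz
    right; right; simp; positivity
  · intro z hz
    refine ⟨⟨?_, ?_, ?_, ?_, ?_, ?_⟩, ?_, ?_⟩ <;> simp [cr]
    · nlinarith
    · nlinarith [mul_self_nonneg z.re, mul_self_nonneg z.im]
    · refine ⟨hm.ne', ?_⟩
      rintro rfl
      simp at hz
  · intro z
    refine ⟨?_, ?_, ?_, ?_, ?_, ?_⟩ <;> simp [cr] <;> nlinarith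
  · intro z
    exact ⟨2 * m, by positivity, by simp [cr]⟩

theorem good_step {k : ℕ} {a b c : ℝ[X]} (h : Good k a b c) {l m : ℝ} (hl : 0 < l) (hm : 0 < m) :
    Good (k + 1) (a + C l * b + C (l ^ 2 / 2) * c) (b + C l * c)
      (c + C (-2 * m) * X * (a + C l * b + C (l ^ 2 / 2) * c)) := by
  have hca : a.coeff (k + 1) = 0 := coeff_eq_zero_of_natDegree_lt (by have := h.da; omega)
  have hcb : b.coeff (k + 1) = 0 := coeff_eq_zero_of_natDegree_lt (by have := h.db; omega)
  have hcc : c.coeff (k + 2) = 0 := coeff_eq_zero_of_natDegree_lt (by have := h.dc; omega)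
  have hda : (a + C l * b + C (l ^ 2 / 2) * c).natDegree ≤ k + 1 := by
    have := h.da; have := h.db; have := h.dc
    refine natDegree_add_le_of_degree_le (natDegree_add_le_of_degree_le (by omega) ?_) ?_
    · exact (natDegree_C_mul_le _ _).trans (by omega)
    · exact (natDegree_C_mul_le _ _).trans (by omega)
  have hc := h.cc
  have hl2 : 0 < l ^ 2 / 2 := by positivity
  refine ⟨hda, ?_, ?_, ?_, ?_, ?_, ?_, ?_, ?_, ?_, ?_, ?_, ?_⟩
  · have := h.db; have := h.dc
    exact natDegree_add_le_of_degree_le (by omega) ((natDegree_C_mul_le _ _).trans (by omega))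
  · have := h.dc
    refine natDegree_add_le_of_degree_le (by omega) ?_
    refine natDegree_mul_le.trans ?_
    have := (natDegree_C_mul_le (-2 * m) X).trans natDegree_X_le
    omega
  · simp only [coeff_add, coeff_C_mul, hca, hcb]
    have := mul_pos hl2 hc
    linarith
  · simp only [coeff_add, coeff_C_mul, hcb]
    have := mul_pos hl hc
    linarith
  · rw [mul_assoc]
    simp only [coeff_add, coeff_C_mul, coeff_X_mul, hca, hcb, hcc]
    have := mul_pos (mul_pos hm hl2) hc
    rw [pow_succ]
    linarith
  · simp [h.c0]
  · intro z hz
    obtain ⟨h1, h2, h3⟩ := h.neg z hz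
    have ha : 0 < a.eval z + l * b.eval z + l ^ 2 / 2 * c.eval z := by positivity
    simp only [eval_add, eval_mul, eval_C, eval_X]
    refine ⟨ha, by positivity, ?_⟩
    have : 0 < 2 * m * (-z) * (a.eval z + l * b.eval z + l ^ 2 / 2 * c.eval z) := by
      have : 0 < -z := by linarith
      positivity
    linarith
  · simp [h.c0, h.zero.1, h.zero.2]
  · intro z hz
    have := ((h.pos z hz).L hl.le).e3 (s := 2 * m * z) (by positivity)
    simp only [eval_add, eval_mul, eval_C, eval_X]
    convert this using 1; ring
  · intro z hz
    obtain ⟨h1, h2, h3⟩ := h.cx z hz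
    have hσ : 0 < -z.im := by linarith
    have g1 := h1.L zero_le_one hσ.le hl.le
    have g2 := h1.ne_L hσ hl.le h2
    have g3 := g1.e3 zero_le_one hσ.le (s := 2 * m) (by positivity)
    have ear : (aeval z (a + C l * b + C (l ^ 2 / 2) * c)).re
        = (aeval z a).re + l * (aeval z b).re + l ^ 2 / 2 * (aeval z c).re := by
      simp only [map_add, map_mul, aeval_C, Complex.coe_algebraMap, Complex.add_re,
        Complex.re_ofReal_mul]
    have eai : (aeval z (a + C l * b + C (l ^ 2 / 2) * c)).im
        = (aeval z a).im + l * (aeval z b).im + l ^ 2 / 2 * (aeval z c).im := by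
      simp only [map_add, map_mul, aeval_C, Complex.coe_algebraMap, Complex.add_im,
        Complex.im_ofReal_mul]
    have ebr : (aeval z (b + C l * c)).re = (aeval z b).re + l * (aeval z c).re := by
      simp only [map_add, map_mul, aeval_C, Complex.coe_algebraMap, Complex.add_re,
        Complex.re_ofReal_mul]
    have ebi : (aeval z (b + C l * c)).im = (aeval z b).im + l * (aeval z c).im := by
      simp only [map_add, map_mul, aeval_C, Complex.coe_algebraMap, Complex.add_im,
        Complex.im_ofReal_mul]
    rw [← ear, ← eai, ← ebr, ← ebi] at g1 g3
    rw [← ear, ← eai] at g2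
    generalize (a + C l * b + C (l ^ 2 / 2) * c) = a1 at *
    generalize (b + C l * c) = b1 at *
    have ecr : (aeval z (c + C (-2 * m) * X * a1)).re = (aeval z c).re +
        2 * m * ((aeval z a1).re * -z.re - 1 * (aeval z a1).im * -z.im) := by
      rw [mul_assoc, map_add, map_mul, aeval_C, Complex.coe_algebraMap, Complex.add_re,
        Complex.re_ofReal_mul, map_mul, aeval_X, Complex.mul_re]
      ring
    have eci : (aeval z (c + C (-2 * m) * X * a1)).im = (aeval z c).im +
        2 * m * ((aeval z a1).re * -z.im + (aeval z a1).im * -z.re) := by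
      rw [mul_assoc, map_add, map_mul, aeval_C, Complex.coe_algebraMap, Complex.add_im,
        Complex.im_ofReal_mul, map_mul, aeval_X, Complex.mul_im]
      ring
    refine ⟨?_, g2, ?_⟩
    · rw [ecr, eci]; exact g3
    · intro h0
      rw [h0] at ecr eci
      exact cxstep hσ (s := 2 * m) (by positivity) g1 g2 ecr.symm eci.symm
  · intro z
    have g := ((h.wr z).L le_rfl zero_le_one hl.le).e3 le_rfl zero_le_one (s := 2 * m)
      (by positivity)
    simp only [eval_add, eval_mul, eval_C, eval_X, derivative_add, derivative_mul, derivative_C,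
      derivative_X, eval_zero, eval_one]
    convert g using 1 <;> ring
  · intro z
    refine ⟨2 * m, by positivity, ?_⟩
    have g := ((h.wr z).L le_rfl zero_le_one hl.le).ac
    simp only [cr] at g ⊢
    simp only [eval_add, eval_mul, eval_C, eval_X, derivative_add, derivative_mul, derivative_C,
      derivative_X, eval_zero, eval_one]
    linarith

theorem good_all (m l : ℕ → ℝ) (k : ℕ) (hl : ∀ i, 1 ≤ i → i ≤ k → 0 < l i)
    (hm : ∀ i, 1 ≤ i → i ≤ k + 1 → 0 < m i) :
    ∃ a b c, (transMat m l (k + 1)).mulVec ![1, 0, 0] = ![a, b, c] ∧ Good k a b c := by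
  induction k with
  | zero =>
    refine ⟨1, 0, C (-2 * m 1) * X, ?_, good_init _ (hm 1 le_rfl le_rfl)⟩
    ext1 i
    fin_cases i <;> simp [transMat, Gmat, Matrix.mulVec, dotProduct, Fin.sum_univ_three]
  | succ k ih =>
    obtain ⟨a, b, c, h1, h2⟩ := ih (fun i h h' => hl i h (by omega)) (fun i h h' => hm i h (by omega))
    refine ⟨_, _, _, ?_, good_step h2 (hl (k + 1) (by omega) le_rfl) (hm (k + 2) (by omega) le_rfl)⟩
    rw [transMat, Matrix.mul_assoc, ← Matrix.mulVec_mulVec, ← Matrix.mulVec_mulVec, h1]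
    ext1 i
    fin_cases i <;> simp [Gmat, Lmat, Matrix.mulVec, dotProduct, Fin.sum_univ_three] <;> ring

theorem stmt3 (n : ℕ) (hn : 1 ≤ n) (x m : ℕ → ℝ)
    (hx : ∀ i, 1 ≤ i → i < n → x i < x (i + 1))
    (hm : ∀ i, 1 ≤ i → i ≤ n → 0 < m i)
    (A : Polynomial ℝ)
    (hA : A = (transMat m (fun k => x (k + 1) - x k) n).mulVec ![1, 0, 0] 2) :
    A.natDegree = n ∧
    ∃ lam : Fin n → ℝ, StrictMono lam ∧ lam ⟨0, hn⟩ = 0 ∧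
      (∀ i, A.IsRoot (lam i)) ∧
      (∀ i, A.rootMultiplicity (lam i) = 1) ∧
      (∀ z : ℝ, A.IsRoot z → ∃ i, z = lam i) := by
  obtain ⟨k, rfl⟩ : ∃ k, n = k + 1 := ⟨n - 1, by omega⟩
  obtain ⟨a, b, c, h1, g⟩ := good_all m (fun k => x (k + 1) - x k) k
    (fun i h h' => sub_pos.2 (hx i h (by omega))) hm
  rw [h1] at hA
  have hAc : A = c := by simpa using hA
  clear hA h1
  subst hAc
  have hcne : A.coeff (k + 1) ≠ 0 := by
    intro h0
    have := g.cc
    simp [h0] at this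
  have hdeg : A.natDegree = k + 1 := le_antisymm g.dc (le_natDegree_of_ne_zero hcne)
  have hA0 : A ≠ 0 := by
    rintro rfl
    simp at hcne
  refine ⟨hdeg, ?_⟩
  -- simplicity
  have hmult : ∀ z : ℝ, A.IsRoot z → A.rootMultiplicity z = 1 := by
    intro z hz
    have hz' : A.eval z = 0 := hz
    have ha : a.eval z ≠ 0 := by
      intro ha
      rcases lt_trichotomy z 0 with h | h | h
      · exact (g.neg z h).1.ne' ha
      · rw [h, g.zero.1] at ha
        exact one_ne_zero ha
      · have := g.pos z h
        simp [Pos3, ha, hz'] at this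
    obtain ⟨s, hs, hw⟩ := g.ws z
    have hd : ¬ (derivative A).IsRoot z := by
      intro hd
      have hd' : (derivative A).eval z = 0 := hd
      simp only [cr, hz', hd'] at hw
      have : 0 < s * (a.eval z) ^ 2 := by positivity
      linarith
    have h1 : 0 < A.rootMultiplicity z := (rootMultiplicity_pos hA0).2 hz
    have h2 : ¬ 1 < A.rootMultiplicity z := by
      rw [one_lt_rootMultiplicity_iff_isRoot hA0]
      exact fun h => hd h.2
    omega
  -- real-rootedness
  have hsplit : A.Splits := by
    refine Splits.of_splits_map (algebraMap ℝ ℂ) (IsAlgClosed.splits _) ?_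
    intro z hz
    have hz0 : aeval z A = 0 := by
      have := isRoot_of_mem_roots hz
      rwa [IsRoot.def, eval_map_algebraMap] at this
    have him : z.im = 0 := by
      rcases lt_trichotomy z.im 0 with h | h | h
      · exact absurd hz0 (g.cx z h).2.2
      · exact h
      · exfalso
        refine (g.cx ((starRingEnd ℂ) z) (by simpa using h)).2.2 ?_
        have := aeval_conj A z
        rw [this, hz0, map_zero]
    exact ⟨z.re, by apply Complex.ext <;> simp [him]⟩
  have hnodup : A.roots.Nodup := by
    rw [Multiset.nodup_iff_count_le_one]
    intro z
    rw [count_roots]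
    by_cases hz : A.IsRoot z
    · exact (hmult z hz).le
    · rw [rootMultiplicity_eq_zero hz]; exact zero_le_one
  have hcard : A.roots.toFinset.card = k + 1 := by
    rw [Multiset.toFinset_card_of_nodup hnodup, ← hsplit.natDegree_eq_card_roots, hdeg]
  have hmem : ∀ z, z ∈ A.roots.toFinset ↔ A.IsRoot z := by
    intro z
    rw [Multiset.mem_toFinset, mem_roots hA0]
  have hroot : ∀ i, A.IsRoot (A.roots.toFinset.orderEmbOfFin hcard i) := fun i =>
    (hmem _).1 (Finset.orderEmbOfFin_mem _ hcard i)
  have hsurj : ∀ z : ℝ, A.IsRoot z → ∃ i, z = A.roots.toFinset.orderEmbOfFin hcard i := by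
    intro z hz
    have : z ∈ Set.range (A.roots.toFinset.orderEmbOfFin hcard) := by
      rw [Finset.range_orderEmbOfFin]
      exact (hmem z).2 hz
    obtain ⟨i, hi⟩ := this
    exact ⟨i, hi.symm⟩
  refine ⟨A.roots.toFinset.orderEmbOfFin hcard, OrderEmbedding.strictMono _, ?_, hroot,
    fun i => hmult _ (hroot i), hsurj⟩
  apply le_antisymm
  · obtain ⟨i, hi⟩ := hsurj 0 g.c0
    calc _ ≤ A.roots.toFinset.orderEmbOfFin hcard i :=
          (OrderEmbedding.monotone _) (Fin.mk_le_of_le_val (Nat.zero_le _))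
      _ = 0 := hi.symm
  · by_contra hneg
    push Not at hneg
    exact (g.neg _ hneg).2.2.ne' (hroot _)
end

section
/- Let n ≥ 2, let x_1 < ⋯ < x_n be real and m_1, …, m_n > 0, set l_k = x_{k+1} − x_k, and let (C(z), B(z), A(z))ᵗ = S(z)(1,0,0)ᵗ, where S(z) = G_n(z) L_{n−1} G_{n−1}(z) ⋯ L_1 G_1(z) with L_k = [[1, l_k, l_k²/2],[0,1,l_k],[0,0,1]] and G_k(z) = [[1,0,0],[0,1,0],[−2 m_k z,0,1]]. Then for every nonzero root λ of A (these roots are real, positive and simple), the residue b = B(λ)/A'(λ) of W = B/A at λ satisfies b < 0; equivalently, B(λ) · A'(λ) < 0. -/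
open Polynomial Matrix

/-- The invariant: six Wronskian-type quantities are nonnegative. -/
def WInv (z c b a c' b' a' : ℝ) : Prop :=
  0 ≤ c' * b - c * b' ∧ 0 ≤ c' * a - c * a' ∧ 0 ≤ b' * a - b * a' ∧
  0 ≤ z * (c' * b - c * b') + b * c ∧ 0 ≤ z * (c' * a - c * a') + a * c ∧
  0 ≤ z * (b' * a - b * a') + a * b

lemma quad_nonneg (l a b : ℝ) : 0 ≤ b ^ 2 + l * a * b + l ^ 2 / 2 * a ^ 2 := by
  nlinarith [sq_nonneg (b + l * a / 2), sq_nonneg (l * a)]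

lemma quad_pos (l a b : ℝ) (hl : 0 < l) (ha : a ≠ 0) :
    0 < b ^ 2 + l * a * b + l ^ 2 / 2 * a ^ 2 := by
  have : 0 < (l * a) ^ 2 := by positivity
  nlinarith [sq_nonneg (b + l * a / 2)]

lemma stepL (z l c b a c' b' a' : ℝ) (hl : 0 < l) (h : WInv z c b a c' b' a') :
    WInv z (c + l * b + l ^ 2 / 2 * a) (b + l * a) a
      (c' + l * b' + l ^ 2 / 2 * a') (b' + l * a') a' := by
  obtain ⟨hp, hq, hr, hs, ht, hu⟩ := h
  refine ⟨?_, ?_, ?_, ?_, ?_, ?_⟩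
  · have : 0 ≤ (c' * b - c * b') + l * (c' * a - c * a') + l ^ 2 / 2 * (b' * a - b * a') := by
      positivity
    convert this using 1; ring
  · have : 0 ≤ (c' * a - c * a') + l * (b' * a - b * a') := by positivity
    convert this using 1; ring
  · convert hr using 1; ring
  · have hQ := quad_nonneg l a b
    have : 0 ≤ (z * (c' * b - c * b') + b * c) + l * (z * (c' * a - c * a') + a * c)
        + l ^ 2 / 2 * (z * (b' * a - b * a') + a * b)
        + l * (b ^ 2 + l * a * b + l ^ 2 / 2 * a ^ 2) := by positivity
    convert this using 1; ring
  · have : 0 ≤ (z * (c' * a - c * a') + a * c) + l * (z * (b' * a - b * a') + a * b)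
        + l ^ 2 / 2 * a ^ 2 := by positivity
    convert this using 1; ring
  · have : 0 ≤ (z * (b' * a - b * a') + a * b) + l * a ^ 2 := by positivity
    convert this using 1; ring

lemma stepG (z M c b a c' b' a' : ℝ) (hM : 0 < M) (h : WInv z c b a c' b' a') :
    WInv z c b (a - M * z * c) c' b' (a' - M * c - M * z * c') := by
  obtain ⟨hp, hq, hr, hs, ht, hu⟩ := h
  refine ⟨hp, ?_, ?_, hs, ?_, ?_⟩
  · have : 0 ≤ (c' * a - c * a') + M * c ^ 2 := by positivity
    convert this using 1; ring
  · have : 0 ≤ (b' * a - b * a') + M * (z * (c' * b - c * b') + b * c) := by positivity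
    convert this using 1; ring
  · convert ht using 1; ring
  · have : 0 ≤ (z * (b' * a - b * a') + a * b) + M * z ^ 2 * (c' * b - c * b') := by positivity
    convert this using 1; ring

lemma step_strict (z l M c b a c' b' a' : ℝ) (hl : 0 < l) (hM : 0 < M)
    (h : WInv z c b a c' b' a') (hs : 0 < b' * a - b * a' ∨ a ≠ 0) :
    0 < (b' + l * a') * (a - M * z * (c + l * b + l ^ 2 / 2 * a)) - (b + l * a) *
      (a' - M * (c + l * b + l ^ 2 / 2 * a) - M * z * (c' + l * b' + l ^ 2 / 2 * a')) := by
  obtain ⟨hp, hq, hr, hs', ht, hu⟩ := h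
  have key : 0 < (b' * a - b * a') + M * ((z * (c' * b - c * b') + b * c)
        + l * (z * (c' * a - c * a') + a * c)
        + l ^ 2 / 2 * (z * (b' * a - b * a') + a * b)
        + l * (b ^ 2 + l * a * b + l ^ 2 / 2 * a ^ 2)) := by
    rcases hs with hs | ha
    · have hQ := quad_nonneg l a b
      positivity
    · have hQ := quad_pos l a b hl ha
      positivity
  convert key using 1; ring

lemma vec_succ (m l : ℕ → ℝ) (k : ℕ) :
    let v := (transMat m l (k + 1)).mulVec ![1, 0, 0]
    let w := (transMat m l (k + 2)).mulVec ![1, 0, 0]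
    w 0 = v 0 + C (l (k + 1)) * v 1 + C (l (k + 1) ^ 2 / 2) * v 2 ∧
    w 1 = v 1 + C (l (k + 1)) * v 2 ∧
    w 2 = v 2 + C (-2 * m (k + 2)) * X * w 0 := by
  intro v w
  have hw : w = (Gmat (m (k + 2))).mulVec ((Lmat (l (k + 1))).mulVec v) := by
    simp only [w, v, transMat, Matrix.mulVec_mulVec, Matrix.mul_assoc]
  rw [hw]
  refine ⟨?_, ?_, ?_⟩ <;>
    simp [Gmat, Lmat, Matrix.mulVec, dotProduct, Fin.sum_univ_three] <;> ring

lemma main_inv (m l : ℕ → ℝ) (z : ℝ) (hz : z ≠ 0) (k : ℕ)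
    (hm : ∀ i, 1 ≤ i → i ≤ k + 1 → 0 < m i) (hl : ∀ i, 1 ≤ i → i < k + 1 → 0 < l i) :
    let v := (transMat m l (k + 1)).mulVec ![1, 0, 0]
    WInv z ((v 0).eval z) ((v 1).eval z) ((v 2).eval z) ((v 0).derivative.eval z)
      ((v 1).derivative.eval z) ((v 2).derivative.eval z) ∧
    (0 < (v 1).derivative.eval z * (v 2).eval z - (v 1).eval z * (v 2).derivative.eval z ∨
      k = 0 ∧ (v 2).eval z ≠ 0) := by
  induction k with
  | zero =>
    intro v
    have h1 := hm 1 le_rfl (by norm_num)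
    have h0 : v 0 = 1 := by
      simp [v, transMat, Gmat, Matrix.mulVec, dotProduct, Fin.sum_univ_three]
    have hb : v 1 = 0 := by
      simp [v, transMat, Gmat, Matrix.mulVec, dotProduct, Fin.sum_univ_three]
    have ha : v 2 = C (-2 * m 1) * X := by
      simp [v, transMat, Gmat, Matrix.mulVec, dotProduct, Fin.sum_univ_three]
    rw [h0, hb, ha]
    simp only [WInv, derivative_C_mul, derivative_X, derivative_one, derivative_zero, eval_mul,
      eval_C, eval_X, eval_one, eval_zero]
    refine ⟨⟨by simp, by linarith, by simp, by simp, by ring_nf; simp, by simp⟩, Or.inr ⟨by trivial, ?_⟩⟩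
    exact mul_ne_zero (by linarith) hz
  | succ k ih =>
    intro w
    have hM := hm (k + 2) (by omega) (by omega)
    have hL := hl (k + 1) (by omega) (by omega)
    obtain ⟨hI, hS⟩ := ih (fun i h1 h2 => hm i h1 (by omega)) (fun i h1 h2 => hl i h1 (by omega))
    obtain ⟨e0, e1, e2⟩ := vec_succ m l k
    change w 0 = _ at e0
    change w 1 = _ at e1
    change w 2 = _ + _ * w 0 at e2
    rw [e0] at e2
    rw [e0, e1, e2]
    generalize (transMat m l (k + 1)).mulVec ![1, 0, 0] = v at *
    have hM2 : 0 < 2 * m (k + 2) := by linarith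
    have hI2 := stepG z _ _ _ _ _ _ _ hM2 (stepL z _ _ _ _ _ _ _ hL hI)
    have hS2 := step_strict z _ _ _ _ _ _ _ _ hL hM2 hI (hS.imp id (fun h => h.2))
    refine ⟨?_, Or.inl ?_⟩
    · convert hI2 using 1 <;>
        simp only [derivative_add, derivative_mul, derivative_C, derivative_X, eval_add, eval_mul,
          eval_C, eval_X, eval_zero, eval_one] <;> ring
    · convert hS2 using 1
      simp only [derivative_add, derivative_mul, derivative_C, derivative_X, eval_add, eval_mul,
          eval_C, eval_X, eval_zero, eval_one]
      ring

/-- **Negativity of the residues of the Weyl function.**  For the discrete cubic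
string with `x_1 < ⋯ < x_n` and all masses positive, every nonzero root `λ` of the
polynomial `A` satisfies `B(λ)·A'(λ) < 0`; equivalently the residue
`b = B(λ)/A'(λ)` of `W = B/A` at `λ` is negative. -/
theorem stmt7 (n : ℕ) (hn : 2 ≤ n) (x m : ℕ → ℝ)
    (hx : ∀ i, 1 ≤ i → i < n → x i < x (i + 1))
    (hm : ∀ i, 1 ≤ i → i ≤ n → 0 < m i)
    (Bp Ap : Polynomial ℝ)
    (hB : Bp = (transMat m (fun k => x (k + 1) - x k) n).mulVec ![1, 0, 0] 1)
    (hA : Ap = (transMat m (fun k => x (k + 1) - x k) n).mulVec ![1, 0, 0] 2) :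
    ∀ lam : ℝ, lam ≠ 0 → Ap.eval lam = 0 →
      Bp.eval lam * Ap.derivative.eval lam < 0 ∧
      Bp.eval lam / Ap.derivative.eval lam < 0 := by
  intro lam hlam hroot
  obtain ⟨k, rfl⟩ : ∃ k, n = k + 1 + 1 := ⟨n - 2, by omega⟩
  have h := (main_inv m (fun k => x (k + 1) - x k) lam hlam (k + 1) hm
    (fun i h1 h2 => sub_pos.mpr (hx i h1 h2))).2
  rw [← hB, ← hA, hroot] at h
  have h3 : Bp.eval lam * Ap.derivative.eval lam < 0 := by
    rcases h with h | h
    · linarith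
    · omega
  exact ⟨h3, div_neg_iff.mpr (mul_neg_iff.mp h3)⟩
end

section
/- Let n ≥ 2, let 0 < λ_1 < ⋯ < λ_{n−1}, b_1, …, b_{n−1} < 0 and M > 0 be given. Define c_k = −Σ_{j=1}^{n−1} b_j b_k/(λ_j + λ_k), and the rational functions W(z) = Σ_{k=1}^{n−1} b_k/(z − λ_k), Z(z) = −1/(2Mz) + Σ_{k=1}^{n−1} c_k/(z − λ_k), W*(z) = −W(−z), Z*(z) = Z(−z). Fix 1 ≤ k ≤ n−1. Then there exist unique polynomials Q, P, P̂ with deg Q ≤ k, deg P ≤ k−1, deg P̂ ≤ k−1 and Q(0) = 1 such that, as z → ∞: Q(z)Z(z) − P̂(z) = O(z^{−1}), Q(z)W(z) − P(z) = O(z^{−1}), and P̂(z) + P(z)W*(z) + Q(z)Z*(z) = O(z^{−(k+1)}). Moreover, writing Q(z) = 1 + Σ_{j=1}^{k} q_j z^j and setting I_{ij} = Σ_{a,b=1}^{n−1} b_a b_b λ_a^i λ_b^j/(λ_a + λ_b), the coefficients satisfy the k×k linear system Σ_{j=1}^{k} I_{i−1, j} q_j = −(I_{i−1, 0} + δ_{i1}/(2M))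 for i = 1, …, k. -/
open Polynomial Filter Asymptotics

lemma sign_poly (m : ℕ) : ∀ N : ℝ[X], N.natDegree ≤ m → ∃ S : Finset ℝ,
    (∀ x ∈ S, 0 < x ∧ N.eval x = 0) ∧
    ((∀ x, 0 < x → 0 ≤ (∏ s ∈ S, (x - s)) * N.eval x) ∨
     (∀ x, 0 < x → (∏ s ∈ S, (x - s)) * N.eval x ≤ 0)) := by
  induction m with
  | zero =>
    intro N hN
    refine ⟨∅, by simp, ?_⟩
    rw [Polynomial.eq_C_of_natDegree_le_zero hN]
    simp only [Finset.prod_empty, one_mul, eval_C]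
    rcases le_total 0 (N.coeff 0) with h | h
    · exact Or.inl fun _ _ => h
    · exact Or.inr fun _ _ => h
  | succ m ih =>
    intro N hN
    by_cases hr : ∃ x, 0 < x ∧ N.eval x = 0
    · obtain ⟨x, hx, hNx⟩ := hr
      obtain ⟨N', rfl⟩ := dvd_iff_isRoot.mpr hNx
      have hdeg : N'.natDegree ≤ m := by
        by_cases h0 : N' = 0
        · simp [h0]
        · rw [natDegree_mul (X_sub_C_ne_zero x) h0, natDegree_X_sub_C] at hN
          omega
      obtain ⟨S, hS, hsg⟩ := ih N' hdeg
      by_cases hxS : x ∈ S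
      · refine ⟨S.erase x, ?_, ?_⟩
        · intro y hy
          have := hS y (Finset.mem_of_mem_erase hy)
          exact ⟨this.1, by simp [this.2]⟩
        · have key : ∀ y, (∏ s ∈ S.erase x, (y - s)) * ((X - C x) * N').eval y
              = (∏ s ∈ S, (y - s)) * N'.eval y := by
            intro y
            rw [← Finset.mul_prod_erase S _ hxS]
            simp; ring
          simpa only [key] using hsg
      · refine ⟨insert x S, ?_, ?_⟩
        · intro y hy
          rcases Finset.mem_insert.mp hy with rfl | hy
          · exact ⟨hx, hNx⟩
          · exact ⟨(hS y hy).1, by simp [(hS y hy).2]⟩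
        · have key : ∀ y, (∏ s ∈ insert x S, (y - s)) * ((X - C x) * N').eval y
              = (y - x) ^ 2 * ((∏ s ∈ S, (y - s)) * N'.eval y) := by
            intro y
            rw [Finset.prod_insert hxS]
            simp; ring
          simp only [key]
          rcases hsg with h | h
          · exact Or.inl fun y hy => mul_nonneg (sq_nonneg _) (h y hy)
          · exact Or.inr fun y hy => mul_nonpos_of_nonneg_of_nonpos (sq_nonneg _) (h y hy)
    · refine ⟨∅, by simp, ?_⟩
      simp only [Finset.prod_empty, one_mul]
      by_contra hcon
      push Not at hcon
      obtain ⟨⟨x, hx, hx'⟩, ⟨y, hy, hy'⟩⟩ := hcon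
      apply hr
      have hc : ContinuousOn (fun z => N.eval z) (Set.Ioi 0) := N.continuous.continuousOn
      have := (isPreconnected_Ioi (a := (0:ℝ))).intermediate_value (show x ∈ Set.Ioi 0 from hx)
        (show y ∈ Set.Ioi 0 from hy) hc
      obtain ⟨z, hz, hz'⟩ := this (show (0:ℝ) ∈ Set.Icc _ _ from ⟨hx'.le, hy'.le⟩)
      exact ⟨z, hz, hz'⟩

lemma few_zeros {ι : Type*} [Fintype ι] (lam w : ι → ℝ) (hpos : ∀ i, 0 < lam i)
    (hw : ∀ i, w i < 0) (p : ℝ[X]) (S : Finset ℝ) (hS : ∀ x ∈ S, 0 < x)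
    (hdeg : p.degree < S.card)
    (hz : ∀ x ∈ S, ∑ d, w d * p.eval (lam d) / (x + lam d) = 0) (i : ι) :
    p.eval (lam i) = 0 := by
  classical
  have hinj : Set.InjOn (fun x : ℝ => -x) S := fun a _ b _ h => neg_injective h
  have hint := Lagrange.eq_interpolate hinj hdeg
  have hprod : ∀ d, 0 < eval (lam d) (Lagrange.nodal S (fun x : ℝ => -x)) := by
    intro d
    rw [Lagrange.eval_nodal]
    exact Finset.prod_pos fun x hx => by have := hS x hx; have := hpos d; linarith
  have h1 : ∀ d, p.eval (lam d) / eval (lam d) (Lagrange.nodal S (fun x : ℝ => -x))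
      = ∑ x ∈ S, Lagrange.nodalWeight S (fun x : ℝ => -x) x * p.eval (-x) / (x + lam d) := by
    intro d
    have := Lagrange.eval_interpolate_not_at_node (s := S) (v := fun x : ℝ => -x)
      (fun x => p.eval (-x)) (x := lam d) (by
        intro x hx
        have := hS x hx; have := hpos d; intro h; linarith)
    rw [← hint] at this
    rw [this, mul_div_cancel_left₀ _ (hprod d).ne']
    refine Finset.sum_congr rfl fun x hx => ?_
    rw [sub_neg_eq_add, add_comm (lam d)]
    ring
  have h2 : ∑ d, w d * p.eval (lam d) ^ 2 / eval (lam d) (Lagrange.nodal S (fun x : ℝ => -x)) = 0 := by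
    have : ∀ d, w d * p.eval (lam d) ^ 2 / eval (lam d) (Lagrange.nodal S (fun x : ℝ => -x))
      = ∑ x ∈ S, Lagrange.nodalWeight S (fun x : ℝ => -x) x * p.eval (-x) *
          (w d * p.eval (lam d) / (x + lam d)) := by
      intro d
      rw [show w d * p.eval (lam d) ^ 2 / eval (lam d) (Lagrange.nodal S (fun x : ℝ => -x))
        = w d * p.eval (lam d) * (p.eval (lam d) / eval (lam d) (Lagrange.nodal S (fun x : ℝ => -x)))
        by ring, h1, Finset.mul_sum]
      exact Finset.sum_congr rfl fun x hx => by ring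
    simp only [this]
    rw [Finset.sum_comm]
    refine Finset.sum_eq_zero fun x hx => ?_
    rw [← Finset.mul_sum, hz x hx, mul_zero]
  have h3 := (Finset.sum_eq_zero_iff_of_nonpos (by
    intro d _
    exact div_nonpos_of_nonpos_of_nonneg
      (mul_nonpos_of_nonpos_of_nonneg (hw d).le (sq_nonneg _)) (hprod d).le)).mp h2 i (Finset.mem_univ i)
  rcases div_eq_zero_iff.mp h3 with h | h
  · rcases mul_eq_zero.mp h with h | h
    · exact absurd h (hw i).ne
    · exact pow_eq_zero_iff (two_ne_zero) |>.mp h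
  · exact absurd h (hprod i).ne'

lemma nonsing_poly {ι : Type*} [Fintype ι] (lam b : ι → ℝ) (hpos : ∀ i, 0 < lam i)
    (hlam : Function.Injective lam)
    (hb : ∀ i, b i < 0) (k : ℕ) (hk : k ≤ Fintype.card ι) (p : ℝ[X]) (hp : p.degree < k)
    (horth : ∀ r : ℝ[X], r.degree < k →
      ∑ a, b a * r.eval (lam a) * ∑ d, b d * lam d * p.eval (lam d) / (lam a + lam d) = 0) :
    p = 0 := by
  classical
  set f : ℝ → ℝ := fun x => ∑ d, b d * lam d * p.eval (lam d) / (x + lam d) with hf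
  have hw : ∀ d, b d * lam d < 0 := fun d => mul_neg_of_neg_of_pos (hb d) (hpos d)
  have himg : (Finset.univ.image lam).card = Fintype.card ι := by
    rw [Finset.card_image_of_injective _ hlam, Finset.card_univ]
  have fin : (∀ i, p.eval (lam i) = 0) → p = 0 := by
    intro h
    refine Polynomial.eq_zero_of_degree_lt_of_eval_finset_eq_zero (Finset.univ.image lam) ?_ ?_
    · rw [himg]; exact hp.trans_le (by exact_mod_cast hk)
    · intro x hx
      obtain ⟨i, _, rfl⟩ := Finset.mem_image.mp hx
      exact h i
  set N : ℝ[X] := ∑ d, C (b d * lam d * p.eval (lam d)) *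
    ∏ e ∈ Finset.univ.erase d, (X + C (lam e)) with hN
  have hden : ∀ x, 0 < x → 0 < ∏ e, (x + lam e) := fun x hx =>
    Finset.prod_pos fun e _ => add_pos hx (hpos e)
  have hNf : ∀ x, 0 < x → N.eval x = f x * ∏ e, (x + lam e) := by
    intro x hx
    simp only [hN, hf, eval_finsetSum, Finset.sum_mul, eval_mul, eval_C, eval_prod, eval_add, eval_X]
    refine Finset.sum_congr rfl fun d _ => ?_
    rw [← Finset.mul_prod_erase Finset.univ _ (Finset.mem_univ d)]
    have : x + lam d ≠ 0 := (add_pos hx (hpos d)).ne'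
    field_simp
  have hNf0 : ∀ x, 0 < x → N.eval x = 0 → f x = 0 := by
    intro x hx h
    rw [hNf x hx] at h
    exact (mul_eq_zero.mp h).resolve_right (hden x hx).ne'
  obtain ⟨S, hS, hsg⟩ := sign_poly _ N le_rfl
  by_cases hc : k ≤ S.card
  · exact fin fun i => few_zeros lam (fun d => b d * lam d) hpos hw p S (fun x hx => (hS x hx).1)
      (hp.trans_le (by exact_mod_cast hc)) (fun x hx => hNf0 x (hS x hx).1 (hS x hx).2) i
  push Not at hc
  set r : ℝ[X] := ∏ s ∈ S, (X - C s) with hr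
  have hrev : ∀ x, r.eval x = ∏ s ∈ S, (x - s) := by
    intro x; simp [hr, eval_prod]
  have hrd : r.degree < k := by
    rw [hr, degree_prod]
    simp; exact_mod_cast hc
  have ho := horth r hrd
  have hsg' : (∀ x, 0 < x → 0 ≤ r.eval x * f x) ∨ (∀ x, 0 < x → r.eval x * f x ≤ 0) := by
    rcases hsg with h | h
    · refine Or.inl fun x hx => ?_
      have := h x hx
      rw [← hrev, hNf x hx, ← mul_assoc] at this
      exact nonneg_of_mul_nonneg_left this (hden x hx)
    · refine Or.inr fun x hx => ?_
      have := h x hx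
      rw [← hrev, hNf x hx, ← mul_assoc] at this
      exact nonpos_of_mul_nonpos_left this (hden x hx)
  have hall : ∀ a, b a * r.eval (lam a) * f (lam a) = 0 := by
    intro a
    rcases hsg' with h | h
    · refine (Finset.sum_eq_zero_iff_of_nonpos ?_).mp ho a (Finset.mem_univ a)
      intro a _
      rw [mul_assoc]
      exact mul_nonpos_of_nonpos_of_nonneg (hb a).le (h _ (hpos a))
    · refine (Finset.sum_eq_zero_iff_of_nonneg ?_).mp ho a (Finset.mem_univ a)
      intro a _
      rw [mul_assoc]
      exact mul_nonneg_of_nonpos_of_nonpos (hb a).le (h _ (hpos a))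
  have hfz : ∀ a, f (lam a) = 0 := by
    intro a
    rcases mul_eq_zero.mp (hall a) with h | h
    · have h' := (mul_eq_zero.mp h).resolve_left (hb a).ne
      rw [hrev, Finset.prod_eq_zero_iff] at h'
      obtain ⟨s, hs, h0⟩ := h'
      have : lam a = s := by linarith
      rw [this]
      exact hNf0 s (hS s hs).1 (hS s hs).2
    · exact h
  refine fin fun i => few_zeros lam (fun d => b d * lam d) hpos hw p (Finset.univ.image lam) ?_ ?_ ?_ i
  · intro x hx
    obtain ⟨i, _, rfl⟩ := Finset.mem_image.mp hx
    exact hpos i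
  · rw [himg]; exact hp.trans_le (by exact_mod_cast hk)
  · intro x hx
    obtain ⟨i, _, rfl⟩ := Finset.mem_image.mp hx
    exact hfz i

lemma nonsing {ι : Type*} [Fintype ι] (lam b : ι → ℝ) (hpos : ∀ i, 0 < lam i)
    (hlam : Function.Injective lam)
    (hb : ∀ i, b i < 0) (k : ℕ) (hk : k ≤ Fintype.card ι) (I : ℕ → ℕ → ℝ)
    (hI : ∀ i j, I i j = ∑ a, ∑ d, b a * b d * lam a ^ i * lam d ^ j / (lam a + lam d)) :
    (Matrix.of fun i j : Fin k => I (i : ℕ) ((j : ℕ) + 1)).det ≠ 0 := by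
  intro hdet
  obtain ⟨v, hv0, hv⟩ := Matrix.exists_mulVec_eq_zero_iff.mpr hdet
  set p : ℝ[X] := ∑ j : Fin k, C (v j) * X ^ (j : ℕ) with hp
  have hpc : ∀ j : Fin k, p.coeff j = v j := by
    intro j
    simp [hp, coeff_X_pow, Fin.val_inj]
  have hpd : p.degree < k := by
    exact degree_sum_fin_lt v
  have hp0 : p = 0 := by
    refine nonsing_poly lam b hpos hlam hb k hk p hpd fun r hr => ?_
    have hre : ∀ x, r.eval x = ∑ i : Fin k, r.coeff i * x ^ (i : ℕ) := by
      intro x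
      rcases Nat.eq_zero_or_pos k with rfl | hk0
      · have : r = 0 := by
          rw [← degree_eq_bot]
          by_contra h
          rw [degree_eq_bot] at h
          have := zero_le_degree_iff.mpr h
          exact absurd hr (not_lt.mpr (by simpa using this))
        simp [this]
      · rw [eval_eq_sum_range' (n := k), Finset.sum_range]
        by_cases h : r = 0
        · simpa [h] using hk0
        · exact (natDegree_lt_iff_degree_lt h).mpr hr
    have hrow : ∀ i : Fin k, ∑ a, ∑ d, b a * lam a ^ (i : ℕ) * (b d * lam d * p.eval (lam d) / (lam a + lam d)) = 0 := by
      intro i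
      have := congrFun hv i
      simp only [Matrix.mulVec, dotProduct, Matrix.of_apply, hI, Pi.zero_apply] at this
      rw [← this]
      simp only [Finset.sum_mul]
      rw [Finset.sum_comm]
      refine Eq.trans ?_ Finset.sum_comm
      rw [Finset.sum_comm]
      refine Finset.sum_congr rfl fun a _ => ?_
      rw [Finset.sum_comm]
      refine Finset.sum_congr rfl fun d _ => ?_
      simp only [hp, eval_finsetSum, eval_mul, eval_C, eval_pow, eval_X, Finset.mul_sum, Finset.sum_div]
      exact Finset.sum_congr rfl fun j _ => by ring
    calc _ = ∑ i : Fin k, r.coeff i * ∑ a, ∑ d, b a * lam a ^ (i : ℕ) * (b d * lam d * p.eval (lam d) / (lam a + lam d)) := by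
            have hms : ∀ i : Fin k, r.coeff i * ∑ a, ∑ d, b a * lam a ^ (i : ℕ) *
                (b d * lam d * p.eval (lam d) / (lam a + lam d)) = ∑ a, r.coeff i * ∑ d,
                b a * lam a ^ (i : ℕ) * (b d * lam d * p.eval (lam d) / (lam a + lam d)) :=
              fun i => Finset.mul_sum _ _ _
            rw [Finset.sum_congr rfl fun i _ => hms i]
            rw [Finset.sum_comm]
            refine Finset.sum_congr rfl fun a _ => ?_
            rw [hre, Finset.mul_sum (s := (Finset.univ : Finset (Fin k))) (a := b a), Finset.sum_mul]
            refine Finset.sum_congr rfl fun i _ => ?_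
            rw [Finset.mul_sum, Finset.mul_sum]
            exact Finset.sum_congr rfl fun d _ => by ring
      _ = 0 := by simp [hrow]
  apply hv0
  funext j
  rw [← hpc j, hp0]; simp

lemma poly_zero_of_isBigO (p : ℝ[X]) (h : (fun z => p.eval z) =O[atTop] (fun z : ℝ => z⁻¹)) :
    p = 0 := by
  have h1 : Tendsto (fun z => p.eval z) atTop (nhds 0) := h.trans_tendsto tendsto_inv_atTop_zero
  rw [Polynomial.tendsto_nhds_iff] at h1
  exact leadingCoeff_eq_zero.mp h1.1

lemma isBigO_inv_sub (μ : ℝ) : (fun z : ℝ => (z - μ)⁻¹) =O[atTop] (fun z : ℝ => z⁻¹) := by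
  refine IsBigO.inv_rev ?_ ?_
  · refine IsBigO.of_bound 2 ?_
    filter_upwards [eventually_ge_atTop (2 * |μ|)] with z hz
    have h1 := abs_nonneg μ
    have h2 := le_abs_self μ
    rw [Real.norm_eq_abs, Real.norm_eq_abs, abs_of_nonneg (by linarith), abs_of_nonneg (by linarith)]
    linarith
  · filter_upwards [eventually_gt_atTop 0] with z hz h
    exact absurd h hz.ne'

lemma isBigO_pf {ι : Type*} [Fintype ι] (c μ : ι → ℝ) :
    (fun z : ℝ => ∑ i, c i / (z - μ i)) =O[atTop] (fun z : ℝ => z⁻¹) := by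
  refine IsBigO.fun_sum (A := fun i z => c i / (z - μ i)) (s := Finset.univ) fun i _ => ?_
  simp only [div_eq_mul_inv]
  exact (isBigO_inv_sub _).const_mul_left _

/-- polynomial part of `Q * ∑ c_i / (z - μ_i)` -/
noncomputable def ppart {ι : Type*} [Fintype ι] (c μ : ι → ℝ) (Q : ℝ[X]) : ℝ[X] :=
  ∑ i, C (c i) * (Q /ₘ (X - C (μ i)))

lemma ppart_natDegree {ι : Type*} [Fintype ι] (c μ : ι → ℝ) (Q : ℝ[X]) (k : ℕ)
    (hQ : Q.natDegree ≤ k) : (ppart c μ Q).natDegree ≤ k - 1 := by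
  refine natDegree_sum_le_of_forall_le _ _ fun i _ => ?_
  refine (natDegree_C_mul_le _ _).trans ?_
  rw [natDegree_divByMonic _ (monic_X_sub_C _), natDegree_X_sub_C]
  omega

lemma eventually_ne {ι : Type*} [Fintype ι] (μ : ι → ℝ) : ∀ᶠ z : ℝ in atTop, ∀ i, z - μ i ≠ 0 := by
  rw [eventually_all]
  intro i
  filter_upwards [eventually_gt_atTop (μ i)] with z hz
  exact (sub_pos.mpr hz).ne'

lemma ppart_eval {ι : Type*} [Fintype ι] (c μ : ι → ℝ) (Q : ℝ[X]) (z : ℝ)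
    (hz : ∀ i, z - μ i ≠ 0) :
    Q.eval z * ∑ i, c i / (z - μ i) - (ppart c μ Q).eval z
      = ∑ i, c i * Q.eval (μ i) / (z - μ i) := by
  rw [ppart, eval_finsetSum, Finset.mul_sum, ← Finset.sum_sub_distrib]
  refine Finset.sum_congr rfl fun i _ => ?_
  have h := congrArg (eval z) (modByMonic_add_div Q (X - C (μ i)))
  rw [modByMonic_X_sub_C_eq_C_eval] at h
  simp only [eval_add, eval_C, eval_mul, eval_sub, eval_X] at h
  rw [← h]
  have := hz i
  simp only [eval_mul, eval_C]
  field_simp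
  ring

lemma ppart_iff {ι : Type*} [Fintype ι] (c μ : ι → ℝ) (Q P : ℝ[X]) (F : ℝ → ℝ)
    (hF : ∀ z, F z = ∑ i, c i / (z - μ i)) :
    (fun z => Q.eval z * F z - P.eval z) =O[atTop] (fun z : ℝ => z⁻¹) ↔ P = ppart c μ Q := by
  have h0 : (fun z => Q.eval z * F z - (ppart c μ Q).eval z) =O[atTop] (fun z : ℝ => z⁻¹) := by
    refine (isBigO_pf (fun i => c i * Q.eval (μ i)) μ).congr' ?_ EventuallyEq.rfl
    filter_upwards [eventually_ne μ] with z hz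
    rw [hF, ppart_eval c μ Q z hz]
  constructor
  · intro h
    have := h0.sub h
    rw [← sub_eq_zero]
    refine poly_zero_of_isBigO _ (this.congr_left fun z => ?_)
    simp only [eval_sub]; ring
  · rintro rfl
    exact h0

lemma geom_expand (μ z : ℝ) (hzμ : z - μ ≠ 0) (k : ℕ) :
    z ^ k * (z - μ)⁻¹ = ∑ m ∈ Finset.range k, μ ^ m * z ^ (k - 1 - m) + μ ^ k * (z - μ)⁻¹ := by
  have h := (Commute.all μ z).geom_sum₂_mul k
  have : (∑ m ∈ Finset.range k, μ ^ m * z ^ (k - 1 - m)) = (z ^ k - μ ^ k) * (z - μ)⁻¹ := by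
    rw [eq_mul_inv_iff_mul_eq₀ hzμ]
    linear_combination -h
  rw [this]; ring

lemma moments_iff {ι : Type*} [Fintype ι] (d μ : ι → ℝ) (k : ℕ) :
    (fun z : ℝ => ∑ i, d i / (z - μ i)) =O[atTop] (fun z : ℝ => (z ^ (k + 1))⁻¹) ↔
      ∀ m < k, ∑ i, d i * μ i ^ m = 0 := by
  set p : ℝ[X] := ∑ m ∈ Finset.range k, C (∑ i, d i * μ i ^ m) * X ^ (k - 1 - m) with hp
  have hpe : ∀ᶠ z : ℝ in atTop, z ^ k * ∑ i, d i / (z - μ i)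
      = p.eval z + ∑ i, (d i * μ i ^ k) / (z - μ i) := by
    filter_upwards [eventually_ne μ, eventually_gt_atTop 0] with z hz hz0
    have : ∀ i, z ^ k * (d i / (z - μ i)) = ∑ m ∈ Finset.range k, d i * μ i ^ m * z ^ (k - 1 - m)
        + (d i * μ i ^ k) / (z - μ i) := by
      intro i
      have := geom_expand (μ i) z (hz i) k
      rw [show z ^ k * (d i / (z - μ i)) = d i * (z ^ k * (z - μ i)⁻¹) by ring, this, mul_add,
        Finset.mul_sum]
      congr 1
      · exact Finset.sum_congr rfl fun m _ => by ring
      · ring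
    rw [Finset.mul_sum, Finset.sum_congr rfl fun i _ => this i, Finset.sum_add_distrib,
      Finset.sum_comm]
    congr 1
    simp only [hp, eval_finsetSum, eval_mul, eval_C, eval_pow, eval_X, Finset.sum_mul]
  have hrem := isBigO_pf (fun i => d i * μ i ^ k) μ
  have h1 : (fun z : ℝ => ∑ i, d i / (z - μ i)) =O[atTop] (fun z : ℝ => (z ^ (k + 1))⁻¹) ↔
      (fun z : ℝ => p.eval z) =O[atTop] (fun z : ℝ => z⁻¹) := by
    constructor
    · intro h
      have h2 := (isBigO_refl (fun z : ℝ => z ^ k) atTop).mul h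
      have h3 : (fun z : ℝ => z ^ k * ∑ i, d i / (z - μ i)) =O[atTop] (fun z : ℝ => z⁻¹) := by
        refine h2.congr' EventuallyEq.rfl ?_
        filter_upwards [eventually_gt_atTop 0] with z hz
        rw [pow_succ]
        field_simp
      refine (h3.sub hrem).congr' ?_ EventuallyEq.rfl
      filter_upwards [hpe] with z hz
      rw [hz]; ring
    · intro h
      have h2 := (isBigO_refl (fun z : ℝ => (z ^ k)⁻¹) atTop).mul (h.add hrem)
      refine h2.congr' ?_ ?_
      · filter_upwards [hpe, eventually_gt_atTop 0] with z hz hz0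
        rw [← hz]
        field_simp
      · filter_upwards [eventually_gt_atTop 0] with z hz0
        rw [pow_succ, mul_inv]
  rw [h1]
  constructor
  · intro h m hm
    have h0 := poly_zero_of_isBigO p h
    have : p.coeff (k - 1 - m) = ∑ i, d i * μ i ^ m := by
      simp only [hp, finsetSum_coeff, coeff_C_mul, coeff_X_pow]
      rw [Finset.sum_eq_single m]
      · simp
      · intro j hj hjm
        have := Finset.mem_range.mp hj
        rw [if_neg (by omega), mul_zero]
      · intro h; exact absurd (Finset.mem_range.mpr hm) h
    rw [← this, h0, coeff_zero]
  · intro h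
    have : p = 0 := by
      rw [hp]
      refine Finset.sum_eq_zero fun m hm => ?_
      rw [h m (Finset.mem_range.mp hm)]; simp
    rw [this]
    simp only [eval_zero]
    exact isBigO_zero _ _

/-- Partial fractions for a product. -/
lemma third_identity {ι : Type*} [Fintype ι] (lam b c x : ι → ℝ) (hpos : ∀ i, 0 < lam i)
    (hc : ∀ i, c i = -∑ j, b j * b i / (lam j + lam i))
    (z : ℝ) (hz : ∀ i, z - lam i ≠ 0) (hz0 : 0 < z) :
    (∑ i, b i * x i / (z - lam i)) * (∑ j, b j / (z + lam j))
      = -(∑ i, c i * x i / (z - lam i))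
        - ∑ j, (∑ i, b j * b i * x i / (lam j + lam i)) / (z + lam j) := by
  rw [Finset.sum_mul_sum]
  simp only [hc, Finset.sum_mul, Finset.sum_div, neg_mul, neg_div,
    Finset.sum_neg_distrib, neg_neg]
  rw [Finset.sum_comm (f := fun j i => b j * b i * x i / (lam j + lam i) / (z + lam j)),
    ← Finset.sum_sub_distrib]
  refine Finset.sum_congr rfl fun i _ => ?_
  rw [← Finset.sum_sub_distrib]
  refine Finset.sum_congr rfl fun j _ => ?_
  have h1 := hz i
  have h2 : z + lam j ≠ 0 := (add_pos hz0 (hpos j)).ne'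
  have h3 : lam j + lam i ≠ 0 := (add_pos (hpos j) (hpos i)).ne'
  field_simp
  ring

lemma core {ι : Type*} [Fintype ι] (lam b : ι → ℝ)
    (hpos : ∀ i, 0 < lam i)
    (M : ℝ) (k : ℕ)
    (c : ι → ℝ)
    (hc : ∀ i, c i = -∑ j, b j * b i / (lam j + lam i))
    (W Z Ws Zs : ℝ → ℝ)
    (hW : ∀ z, W z = ∑ i, b i / (z - lam i))
    (hZ : ∀ z, Z z = -(1 / (2 * M * z)) + ∑ i, c i / (z - lam i))
    (hWs : ∀ z, Ws z = -W (-z)) (hZs : ∀ z, Zs z = Z (-z))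
    (I : ℕ → ℕ → ℝ)
    (hI : ∀ i j, I i j = ∑ a, ∑ d, b a * b d * lam a ^ i * lam d ^ j / (lam a + lam d))
    (c' mu' : Option ι → ℝ) (hc' : ∀ o, c' o = o.elim (-(1 / (2 * M))) c)
    (hmu' : ∀ o, mu' o = o.elim 0 lam)
    (Q P Phat : ℝ[X]) (hQd : Q.natDegree ≤ k) (hQ0 : Q.eval 0 = 1) :
    ((fun z => Q.eval z * Z z - Phat.eval z) =O[atTop] (fun z : ℝ => z⁻¹) ∧
      (fun z => Q.eval z * W z - P.eval z) =O[atTop] (fun z : ℝ => z⁻¹) ∧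
      (fun z => Phat.eval z + P.eval z * Ws z + Q.eval z * Zs z)
        =O[atTop] (fun z : ℝ => (z ^ (k + 1))⁻¹)) ↔
    (Phat = ppart c' mu' Q ∧ P = ppart b lam Q ∧
      ∀ i : Fin k, ∑ j : Fin k, I (i : ℕ) ((j : ℕ) + 1) * Q.coeff ((j : ℕ) + 1)
        = -(I (i : ℕ) 0 + if (i : ℕ) = 0 then 1 / (2 * M) else 0)) := by
  have hZ' : ∀ z, Z z = ∑ o, c' o / (z - mu' o) := by
    intro z
    rw [hZ, Fintype.sum_option]
    simp only [hc', hmu', Option.elim]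
    congr 1
    rw [sub_zero, neg_div, div_div]
  rw [ppart_iff c' mu' Q Phat Z hZ', ppart_iff b lam Q P W hW]
  refine and_congr_right fun h1 => and_congr_right fun h2 => ?_
  set d : Option ι → ℝ := fun o => o.elim (1 / (2 * M))
    (fun j => ∑ i, b j * b i * Q.eval (lam i) / (lam j + lam i)) with hd
  set μ : Option ι → ℝ := fun o => o.elim 0 (fun j => -lam j) with hμ
  have hev : (fun z => Phat.eval z + P.eval z * Ws z + Q.eval z * Zs z) =ᶠ[atTop]
      fun z => ∑ o, d o / (z - μ o) := by
    filter_upwards [eventually_ne lam, eventually_gt_atTop 0] with z hz hz0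
    have hzo : ∀ o, z - mu' o ≠ 0 := by
      intro o
      rw [hmu']
      cases o with
      | none => simpa using hz0.ne'
      | some i => exact hz i
    have e1 := ppart_eval c' mu' Q z hzo
    rw [← h1, ← hZ', Fintype.sum_option] at e1
    simp only [hc', hmu', Option.elim, hQ0] at e1
    have e2 := ppart_eval b lam Q z hz
    rw [← h2, ← hW] at e2
    have hws : Ws z = ∑ j, b j / (z + lam j) := by
      rw [hWs, hW, ← Finset.sum_neg_distrib]
      refine Finset.sum_congr rfl fun j _ => ?_
      rw [← div_neg]; congr 1; ring
    have hzs : Zs z = 1 / (2 * M * z) - ∑ j, c j / (z + lam j) := by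
      rw [hZs, hZ, sub_eq_add_neg, ← Finset.sum_neg_distrib]
      congr 1
      · rw [← div_neg]; congr 1; ring
      · refine Finset.sum_congr rfl fun j _ => ?_
        rw [← div_neg]; congr 1; ring
    have t1 := third_identity lam b c (fun _ => 1) hpos hc z hz hz0
    have t2 := third_identity lam b c (fun i => Q.eval (lam i)) hpos hc z hz hz0
    simp only [mul_one] at t1
    rw [← hws] at t1 t2
    rw [← e2] at t2
    have hcc : ∀ j, (∑ i, b j * b i / (lam j + lam i)) = -c j := by
      intro j
      rw [hc, neg_neg]
      exact Finset.sum_congr rfl fun i _ => by rw [mul_comm (b j), add_comm (lam j)]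
    simp only [hcc, neg_div, Finset.sum_neg_distrib] at t1
    rw [← hW] at t1
    rw [Fintype.sum_option]
    simp only [hd, hμ, Option.elim, sub_neg_eq_add]
    have hZz := hZ z
    have hm : (1 / (2 * M)) / (z - 0) = 1 / (2 * M * z) := by rw [sub_zero, div_div]
    have hm' : (-(1 / (2 * M)) * 1) / (z - 0) = -(1 / (2 * M * z)) := by
      rw [sub_zero, mul_one, neg_div, div_div]
    rw [hm]
    rw [hm'] at e1
    rw [hzs]
    linear_combination -e1 - t2 + Q.eval z * t1 + Q.eval z * hZz
  rw [isBigO_congr hev EventuallyEq.rfl, moments_iff]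
  have hQe : ∀ x, Q.eval x = 1 + ∑ j : Fin k, Q.coeff ((j : ℕ) + 1) * x ^ ((j : ℕ) + 1) := by
    intro x
    rw [eval_eq_sum_range' (n := k + 1) (by omega), Finset.sum_range_succ', ← Finset.sum_range
      (fun j => Q.coeff (j + 1) * x ^ (j + 1)), coeff_zero_eq_eval_zero, hQ0]
    ring
  have hsum : ∀ m : ℕ, ∑ o, d o * μ o ^ m = (-1) ^ m *
      (∑ j : Fin k, I m ((j : ℕ) + 1) * Q.coeff ((j : ℕ) + 1) + I m 0
        + if m = 0 then 1 / (2 * M) else 0) := by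
    intro m
    have hs : ∑ j, (∑ i, b j * b i * Q.eval (lam i) / (lam j + lam i)) * lam j ^ m
        = ∑ j : Fin k, I m ((j : ℕ) + 1) * Q.coeff ((j : ℕ) + 1) + I m 0 := by
      simp only [hI, Finset.sum_mul]
      rw [Finset.sum_comm (s := (Finset.univ : Finset (Fin k))), ← Finset.sum_add_distrib]
      refine Finset.sum_congr rfl fun a _ => ?_
      rw [Finset.sum_comm (s := (Finset.univ : Finset (Fin k))), ← Finset.sum_add_distrib]
      refine Finset.sum_congr rfl fun e _ => ?_
      rw [hQe, mul_add, add_div, add_mul, add_comm, Finset.mul_sum, Finset.sum_div, Finset.sum_mul]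
      congr 1
      · exact Finset.sum_congr rfl fun j _ => by ring
      · ring
    rw [Fintype.sum_option]
    simp only [hd, hμ, Option.elim]
    rw [← hs, mul_add, add_comm, Finset.mul_sum]
    congr 1
    · refine Finset.sum_congr rfl fun j _ => ?_
      rw [neg_pow]; ring
    · by_cases h : m = 0
      · simp [h]
      · simp [h]
  constructor
  · intro h i
    have := h i i.2
    rw [hsum] at this
    have := (mul_eq_zero.mp this).resolve_left (pow_ne_zero _ (by norm_num))
    linarith
  · intro h m hm
    have := h ⟨m, hm⟩
    simp only at this
    rw [hsum, this]
    ring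

/-- **The Type III simultaneous rational approximation problem.**
Given spectral data `0 < λ_1 < ⋯ < λ_{n−1}`, `b_i < 0`, `M > 0`, set
`c_i = −Σ_j b_j b_i/(λ_j + λ_i)`, `W(z) = Σ b_i/(z − λ_i)`,
`Z(z) = −1/(2Mz) + Σ c_i/(z − λ_i)`, `W*(z) = −W(−z)`, `Z*(z) = Z(−z)`.
For fixed `1 ≤ k ≤ n−1` there are unique polynomials `Q, P, P̂` of degrees
`≤ k, k−1, k−1` with `Q(0) = 1` such that `QZ − P̂ = O(z⁻¹)`, `QW − P = O(z⁻¹)`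
and `P̂ + P W* + Q Z* = O(z^{−(k+1)})` as `z → ∞`; moreover the coefficients
`q_j = Q.coeff j` satisfy `Σ_{j=1}^k I_{i−1,j} q_j = −(I_{i−1,0} + δ_{i1}/(2M))`,
where `I_{ij} = Σ_{a,d} b_a b_d λ_a^i λ_d^j/(λ_a + λ_d)`. -/
theorem stmt14 (n : ℕ) (hn : 2 ≤ n) (lam b : Fin (n - 1) → ℝ)
    (hmono : StrictMono lam) (hpos : ∀ i, 0 < lam i) (hb : ∀ i, b i < 0)
    (M : ℝ) (hM : 0 < M) (k : ℕ) (hk1 : 1 ≤ k) (hk2 : k ≤ n - 1)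
    (c : Fin (n - 1) → ℝ)
    (hc : ∀ i, c i = -∑ j, b j * b i / (lam j + lam i))
    (W Z Ws Zs : ℝ → ℝ)
    (hW : ∀ z, W z = ∑ i, b i / (z - lam i))
    (hZ : ∀ z, Z z = -(1 / (2 * M * z)) + ∑ i, c i / (z - lam i))
    (hWs : ∀ z, Ws z = -W (-z)) (hZs : ∀ z, Zs z = Z (-z))
    (I : ℕ → ℕ → ℝ)
    (hI : ∀ i j, I i j = ∑ a, ∑ d, b a * b d * lam a ^ i * lam d ^ j / (lam a + lam d)) :
    (∃! QPP : Polynomial ℝ × Polynomial ℝ × Polynomial ℝ,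
      QPP.1.natDegree ≤ k ∧ QPP.2.1.natDegree ≤ k - 1 ∧ QPP.2.2.natDegree ≤ k - 1 ∧
      QPP.1.eval 0 = 1 ∧
      (fun z => QPP.1.eval z * Z z - QPP.2.2.eval z) =O[atTop] (fun z : ℝ => z⁻¹) ∧
      (fun z => QPP.1.eval z * W z - QPP.2.1.eval z) =O[atTop] (fun z : ℝ => z⁻¹) ∧
      (fun z => QPP.2.2.eval z + QPP.2.1.eval z * Ws z + QPP.1.eval z * Zs z)
        =O[atTop] (fun z : ℝ => (z ^ (k + 1))⁻¹)) ∧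
    (∀ Q P Phat : Polynomial ℝ,
      Q.natDegree ≤ k → P.natDegree ≤ k - 1 → Phat.natDegree ≤ k - 1 →
      Q.eval 0 = 1 →
      (fun z => Q.eval z * Z z - Phat.eval z) =O[atTop] (fun z : ℝ => z⁻¹) →
      (fun z => Q.eval z * W z - P.eval z) =O[atTop] (fun z : ℝ => z⁻¹) →
      (fun z => Phat.eval z + P.eval z * Ws z + Q.eval z * Zs z)
        =O[atTop] (fun z : ℝ => (z ^ (k + 1))⁻¹) →
      ∀ i : Fin k, ∑ j : Fin k, I (i : ℕ) ((j : ℕ) + 1) * Q.coeff ((j : ℕ) + 1)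
        = -(I (i : ℕ) 0 + if (i : ℕ) = 0 then 1 / (2 * M) else 0)) := by
  have hk : k ≤ Fintype.card (Fin (n - 1)) := by simpa using hk2
  have hdet := nonsing lam b hpos hmono.injective hb k hk I hI
  set A : Matrix (Fin k) (Fin k) ℝ := Matrix.of fun i j : Fin k => I (i : ℕ) ((j : ℕ) + 1) with hA
  set c' : Option (Fin (n - 1)) → ℝ := fun o => o.elim (-(1 / (2 * M))) c with hc'
  set mu' : Option (Fin (n - 1)) → ℝ := fun o => o.elim 0 lam with hmu'
  have hcore := core lam b hpos M k c hc W Z Ws Zs hW hZ hWs hZs I hI c' mu'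
    (fun _ => rfl) (fun _ => rfl)
  set rhs : Fin k → ℝ := fun i => -(I (i : ℕ) 0 + if (i : ℕ) = 0 then 1 / (2 * M) else 0) with hrhs
  have hunit : IsUnit A.det := isUnit_iff_ne_zero.mpr hdet
  refine ⟨?_, ?_⟩
  · obtain ⟨v, hv⟩ : ∃ v : Fin k → ℝ, v = A⁻¹.mulVec rhs := ⟨_, rfl⟩
    have hAv : A.mulVec v = rhs := by
      rw [hv, Matrix.mulVec_mulVec, Matrix.mul_nonsing_inv _ hunit, Matrix.one_mulVec]
    obtain ⟨Q, hQ⟩ : ∃ Q : ℝ[X], Q = 1 + ∑ j : Fin k, C (v j) * X ^ ((j : ℕ) + 1) := ⟨_, rfl⟩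
    have hQd : Q.natDegree ≤ k := by
      rw [hQ]
      refine natDegree_add_le_of_degree_le (by simp) ?_
      refine natDegree_sum_le_of_forall_le _ _ fun j _ => ?_
      exact (natDegree_C_mul_X_pow_le _ _).trans (by have := j.2; omega)
    have hQ0 : Q.eval 0 = 1 := by simp [hQ, eval_finsetSum]
    have hQc : ∀ j : Fin k, Q.coeff ((j : ℕ) + 1) = v j := by
      intro j
      simp [hQ, finsetSum_coeff, coeff_X_pow, coeff_one, Fin.val_inj]
    refine ⟨(Q, ppart b lam Q, ppart c' mu' Q), ?_, ?_⟩
    · dsimp only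
      refine ⟨hQd, ppart_natDegree _ _ _ _ hQd, ppart_natDegree _ _ _ _ hQd, hQ0, ?_⟩
      refine (hcore Q _ _ hQd hQ0).mpr ⟨rfl, rfl, fun i => ?_⟩
      simp only [hQc]
      exact congrFun hAv i
    · rintro ⟨Q', P', Phat'⟩ ⟨g1, g2, g3, g4, g5⟩
      dsimp only at g1 g2 g3 g4 g5
      obtain ⟨e1, e2, e3⟩ := (hcore Q' P' Phat' g1 g4).mp g5
      have hv' : A.mulVec (fun j : Fin k => Q'.coeff ((j : ℕ) + 1)) = rhs := funext e3
      have hvv : (fun j : Fin k => Q'.coeff ((j : ℕ) + 1)) = v := by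
        rw [hv, ← hv', Matrix.mulVec_mulVec, Matrix.nonsing_inv_mul _ hunit, Matrix.one_mulVec]
      have hQQ : Q' = Q := by
        ext m
        rcases m with _ | m
        · rw [coeff_zero_eq_eval_zero, coeff_zero_eq_eval_zero, g4, hQ0]
        · by_cases hm : m < k
          · exact (congrFun hvv ⟨m, hm⟩).trans (hQc ⟨m, hm⟩).symm
          · rw [coeff_eq_zero_of_natDegree_lt (by omega), coeff_eq_zero_of_natDegree_lt (by omega)]
      rw [e1, e2, hQQ]
  · intro Q P Phat g1 _ _ g4 g5 g6 g7
    exact ((hcore Q P Phat g1 g4).mp ⟨g5, g6, g7⟩).2.2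
end
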